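/- Define φ : (−∞, 1) → ℝ by φ(m) := (K(m) − E(m))/(m K(m)) for m ≠ 0 and φ(0) := 1/2. Then φ is continuous and differentiable on (−∞, 1), strictly increasing, and satisfies lim_{m → −∞} φ(m) = 0 and lim_{m → 1⁻} φ(m) = 1. -/

import Mathlib

open Real Filter

/-- Complete elliptic integral of the first kind (parameter `m`). -/
noncomputable def Kc (m : ℝ) : ℝ := ∫ θ in (0:ℝ)..(π / 2), 1 / Real.sqrt (1 - m * Real.sin θ ^ 2)

/-- Complete elliptic integral of the second kind (parameter `m`). -/
noncomputable def Ec (m : ℝ) : ℝ := ∫ θ in (0:ℝ)..(π / 2), Real.sqrt (1 - m * Real.sin θ ^ 2)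

/-- `φ(m) = (K(m) − E(m))/(m K(m))`, extended by `φ(0) = 1/2`. -/
noncomputable def phiFun (m : ℝ) : ℝ :=
  if m = 0 then 1 / 2 else (Kc m - Ec m) / (m * Kc m)

open MeasureTheory intervalIntegral Set Topology

lemma one_sub_mul_pos {m x : ℝ} (hm : m < 1) (hx0 : 0 ≤ x) (hx1 : x ≤ 1) : 0 < 1 - m * x := by
  rcases le_or_gt m 0 with h | h
  · nlinarith [mul_nonneg (neg_nonneg.2 h) hx0]
  · nlinarith [mul_le_mul_of_nonneg_left hx1 h.le]

lemma one_sub_mul_sin_sq_pos {m : ℝ} (hm : m < 1) (θ : ℝ) : 0 < 1 - m * sin θ ^ 2 :=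
  one_sub_mul_pos hm (sq_nonneg _) (sin_sq_le_one θ)

lemma continuous_sqrt_one_sub_mul_sin_sq_inv {m : ℝ} (hm : m < 1) :
    Continuous fun θ : ℝ => (√(1 - m * sin θ ^ 2))⁻¹ :=
  Continuous.inv₀ (by fun_prop) fun θ => (sqrt_pos.2 (one_sub_mul_sin_sq_pos hm θ)).ne'

/-- The complete elliptic integral of the first kind with an additional weight `g`. -/
noncomputable def weightedK (g : ℝ → ℝ) (m : ℝ) : ℝ :=
  ∫ θ in (0 : ℝ)..(π / 2), g θ * (√(1 - m * sin θ ^ 2))⁻¹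

lemma intervalIntegrable_weightedK {g : ℝ → ℝ} (hg : Continuous g) {m : ℝ} (hm : m < 1) :
    IntervalIntegrable (fun θ => g θ * (√(1 - m * sin θ ^ 2))⁻¹) volume 0 (π / 2) :=
  (hg.mul (continuous_sqrt_one_sub_mul_sin_sq_inv hm)).intervalIntegrable _ _

lemma differentiableAt_weightedK {g : ℝ → ℝ} (hg : Continuous g) {m : ℝ} (hm : m < 1) :
    DifferentiableAt ℝ (weightedK g) m := by
  obtain ⟨b, hmb, hb⟩ := exists_between hm
  set F' : ℝ → ℝ → ℝ := fun x θ =>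
    g θ * (-(-(sin θ ^ 2) / (2 * √(1 - x * sin θ ^ 2))) / √(1 - x * sin θ ^ 2) ^ 2)
  have hcont : ContinuousOn (fun p : ℝ × ℝ => F' p.1 p.2) (Icc (m - 1) b ×ˢ Icc 0 (π / 2)) := by
    have h0 : ∀ p ∈ Icc (m - 1) b ×ˢ Icc (0 : ℝ) (π / 2), √(1 - p.1 * sin p.2 ^ 2) ≠ 0 :=
      fun p hp => (sqrt_pos.2 (one_sub_mul_sin_sq_pos (hp.1.2.trans_lt hb) p.2)).ne'
    refine ContinuousOn.mul (by fun_prop) (ContinuousOn.div (ContinuousOn.neg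
      (ContinuousOn.div (by fun_prop) (by fun_prop) ?_)) (by fun_prop) ?_)
    · exact fun p hp => mul_ne_zero two_ne_zero (h0 p hp)
    · exact fun p hp => pow_ne_zero _ (h0 p hp)
  obtain ⟨C, hC⟩ := (isCompact_Icc.prod isCompact_Icc).exists_bound_of_continuousOn hcont
  have hs : Ioo (m - 1) b ∈ 𝓝 m := Ioo_mem_nhds (by linarith) hmb
  have hderiv : ∀ θ, ∀ x ∈ Ioo (m - 1) b,
      HasDerivAt (fun x => g θ * (√(1 - x * sin θ ^ 2))⁻¹) (F' x θ) x := by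
    intro θ x hx
    have hpos := one_sub_mul_sin_sq_pos (hx.2.trans hb) θ
    have h1 : HasDerivAt (fun x : ℝ => 1 - x * sin θ ^ 2) (-(sin θ ^ 2)) x := by
      simpa using ((hasDerivAt_id x).mul_const (sin θ ^ 2)).const_sub 1
    exact ((h1.sqrt hpos.ne').fun_inv (sqrt_pos.2 hpos).ne').const_mul (g θ)
  have hF'meas : Continuous (F' m) := by
    have h0 : ∀ θ, √(1 - m * sin θ ^ 2) ≠ 0 :=
      fun θ => (sqrt_pos.2 (one_sub_mul_sin_sq_pos hm θ)).ne'
    refine Continuous.mul hg (Continuous.div (Continuous.neg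
      (Continuous.div (by fun_prop) (by fun_prop) ?_)) (by fun_prop) ?_)
    · exact fun θ => mul_ne_zero two_ne_zero (h0 θ)
    · exact fun θ => pow_ne_zero _ (h0 θ)
  refine (hasDerivAt_integral_of_dominated_loc_of_deriv_le (bound := fun _ => C) hs
    ?_ (intervalIntegrable_weightedK hg hm) hF'meas.aestronglyMeasurable ?_
    intervalIntegrable_const ?_).2.differentiableAt
  · filter_upwards [hs] with x hx
    exact (hg.mul (continuous_sqrt_one_sub_mul_sin_sq_inv
      (hx.2.trans hb))).aestronglyMeasurable
  · refine ae_of_all _ fun θ hθ x hx => hC (x, θ) ⟨Ioo_subset_Icc_self hx, ?_⟩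
    rw [uIoc_of_le (by positivity)] at hθ
    exact Ioc_subset_Icc_self hθ
  · exact ae_of_all _ fun θ _ x hx => hderiv θ x hx

lemma Kc_eq_weightedK (m : ℝ) : Kc m = weightedK (fun _ => 1) m := by
  simp [Kc, weightedK]

lemma weightedK_pos {g : ℝ → ℝ} (hg : Continuous g) (hg0 : ∀ θ, 0 ≤ g θ) {c : ℝ}
    (hc : c ∈ Icc 0 (π / 2)) (hgc : 0 < g c) {m : ℝ} (hm : m < 1) : 0 < weightedK g m := by
  have hw := fun θ => inv_pos.2 (sqrt_pos.2 (one_sub_mul_sin_sq_pos hm θ))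
  exact integral_pos (by positivity)
    (hg.mul (continuous_sqrt_one_sub_mul_sin_sq_inv hm)).continuousOn
    (fun θ _ => mul_nonneg (hg0 θ) (hw θ).le) ⟨c, hc, mul_pos hgc (hw c)⟩

lemma Kc_pos {m : ℝ} (hm : m < 1) : 0 < Kc m := by
  rw [Kc_eq_weightedK]
  exact weightedK_pos continuous_const (fun _ => zero_le_one) (c := 0)
    ⟨le_rfl, by positivity⟩ one_pos hm

lemma weightedK_sin_sq_pos {m : ℝ} (hm : m < 1) : 0 < weightedK (fun θ => sin θ ^ 2) m :=
  weightedK_pos (by fun_prop) (fun θ => sq_nonneg _) (c := π / 2)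
    ⟨by positivity, le_rfl⟩ (by simp) hm

lemma weightedK_cos_sq_pos {m : ℝ} (hm : m < 1) : 0 < weightedK (fun θ => cos θ ^ 2) m :=
  weightedK_pos (by fun_prop) (fun θ => sq_nonneg _) (c := 0)
    ⟨le_rfl, by positivity⟩ (by simp) hm

lemma Kc_sub_weightedK_sin_sq {m : ℝ} (hm : m < 1) :
    Kc m - weightedK (fun θ => sin θ ^ 2) m = weightedK (fun θ => cos θ ^ 2) m := by
  rw [Kc_eq_weightedK, weightedK, weightedK, weightedK,
    ← integral_sub (intervalIntegrable_weightedK (by fun_prop) hm)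
      (intervalIntegrable_weightedK (by fun_prop) hm)]
  refine integral_congr fun θ _ => ?_
  simp only [cos_sq']
  ring

lemma Kc_sub_Ec {m : ℝ} (hm : m < 1) :
    Kc m - Ec m = m * weightedK (fun θ => sin θ ^ 2) m := by
  have hE : IntervalIntegrable (fun θ => √(1 - m * sin θ ^ 2)) volume 0 (π / 2) :=
    Continuous.intervalIntegrable (by fun_prop) _ _
  rw [Kc_eq_weightedK, weightedK, weightedK, Ec,
    ← integral_sub (intervalIntegrable_weightedK continuous_const hm) hE,
    ← intervalIntegral.integral_const_mul]
  refine integral_congr fun θ _ => ?_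
  have hpos := one_sub_mul_sin_sq_pos hm θ
  have hne := (sqrt_pos.2 hpos).ne'
  have hsq := sq_sqrt hpos.le
  field_simp
  linarith

lemma phiFun_eq {m : ℝ} (hm : m < 1) :
    phiFun m = weightedK (fun θ => sin θ ^ 2) m / Kc m := by
  by_cases h : m = 0
  · subst h
    have h1 : ∫ θ in (0 : ℝ)..(π / 2), sin θ ^ 2 = π / 4 := by
      rw [integral_sin_sq]; simp; ring
    have := pi_pos.ne'
    simp only [phiFun, if_true, weightedK, Kc, zero_mul, sub_zero, sqrt_one, inv_one, mul_one, h1,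
      div_one, intervalIntegral.integral_const, smul_eq_mul]
    field_simp
    ring
  · rw [phiFun, if_neg h, Kc_sub_Ec hm, mul_div_mul_left _ _ h]

lemma one_sub_phiFun {m : ℝ} (hm : m < 1) :
    1 - phiFun m = weightedK (fun θ => cos θ ^ 2) m / Kc m := by
  rw [phiFun_eq hm, ← Kc_sub_weightedK_sin_sq hm, sub_div, div_self (Kc_pos hm).ne']

lemma phiFun_pos {m : ℝ} (hm : m < 1) : 0 < phiFun m := by
  rw [phiFun_eq hm]
  exact div_pos (weightedK_sin_sq_pos hm) (Kc_pos hm)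

lemma phiFun_lt_one {m : ℝ} (hm : m < 1) : phiFun m < 1 := by
  rw [← sub_pos, one_sub_phiFun hm]
  exact div_pos (weightedK_cos_sq_pos hm) (Kc_pos hm)

lemma differentiableOn_phiFun : DifferentiableOn ℝ phiFun (Iio 1) := by
  have h : DifferentiableOn ℝ (fun m => weightedK (fun θ => sin θ ^ 2) m / Kc m) (Iio 1) := by
    intro m hm
    refine (DifferentiableAt.fun_div (differentiableAt_weightedK (by fun_prop) hm) ?_
      (Kc_pos hm).ne').differentiableWithinAt
    rw [funext Kc_eq_weightedK]
    exact differentiableAt_weightedK continuous_const hm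
  exact h.congr fun m hm => phiFun_eq hm

lemma sqrt_inv_mul_sqrt_inv_lt {a b x y : ℝ} (hab : a < b) (hb : b < 1) (hx : 0 ≤ x)
    (hxy : x < y) (hy : y ≤ 1) :
    (√(1 - b * x))⁻¹ * (√(1 - a * y))⁻¹ < (√(1 - b * y))⁻¹ * (√(1 - a * x))⁻¹ := by
  have hbx := one_sub_mul_pos hb hx (hxy.le.trans hy)
  have hby := one_sub_mul_pos hb (hx.trans hxy.le) hy
  have hax := one_sub_mul_pos (hab.trans hb) hx (hxy.le.trans hy)
  have hay := one_sub_mul_pos (hab.trans hb) (hx.trans hxy.le) hy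
  rw [← mul_inv, ← mul_inv, ← sqrt_mul hbx.le, ← sqrt_mul hby.le]
  refine inv_strictAnti₀ (sqrt_pos.2 (mul_pos hby hax)) (sqrt_lt_sqrt (mul_pos hby hax).le ?_)
  nlinarith [mul_pos (sub_pos.2 hab) (sub_pos.2 hxy)]

lemma strictMonoOn_phiFun : StrictMonoOn phiFun (Iio 1) := by
  intro a ha b hb hab
  rw [mem_Iio] at ha hb
  obtain ⟨c, hc⟩ : ∃ c, phiFun a = c := ⟨_, rfl⟩
  have hc0 : 0 < c := hc ▸ phiFun_pos ha
  have hc1 : c < 1 := hc ▸ phiFun_lt_one ha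
  have hcenter : ∀ m < 1, weightedK (fun θ => sin θ ^ 2 - c) m = (phiFun m - c) * Kc m := by
    intro m hm
    rw [phiFun_eq hm, sub_mul, div_mul_cancel₀ _ (Kc_pos hm).ne', Kc_eq_weightedK, weightedK,
      weightedK, weightedK, ← intervalIntegral.integral_const_mul,
      ← integral_sub (intervalIntegrable_weightedK (by fun_prop) hm)
        ((intervalIntegrable_weightedK (by fun_prop) hm).const_mul c)]
    refine integral_congr fun θ _ => ?_
    ring
  have hwa : 0 < (√(1 - a * c))⁻¹ := inv_pos.2 (sqrt_pos.2 (one_sub_mul_pos ha hc0.le hc1.le))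
  have hpos : 0 < ∫ θ in (0 : ℝ)..(π / 2), (sin θ ^ 2 - c) *
      ((√(1 - b * sin θ ^ 2))⁻¹ * (√(1 - a * c))⁻¹ -
        (√(1 - b * c))⁻¹ * (√(1 - a * sin θ ^ 2))⁻¹) := by
    have h1 := continuous_sqrt_one_sub_mul_sin_sq_inv ha
    have h2 := continuous_sqrt_one_sub_mul_sin_sq_inv hb
    have hneg : ∀ θ, sin θ ^ 2 < c → 0 < (sin θ ^ 2 - c) *
        ((√(1 - b * sin θ ^ 2))⁻¹ * (√(1 - a * c))⁻¹ -
          (√(1 - b * c))⁻¹ * (√(1 - a * sin θ ^ 2))⁻¹) := fun θ h =>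
      mul_pos_of_neg_of_neg (sub_neg.2 h)
        (sub_neg.2 (sqrt_inv_mul_sqrt_inv_lt hab hb (sq_nonneg _) h hc1.le))
    refine integral_pos (by positivity) (Continuous.continuousOn (by fun_prop)) ?_
      ⟨0, ⟨le_rfl, by positivity⟩, hneg 0 (by simpa using hc0)⟩
    intro θ _
    rcases lt_trichotomy (sin θ ^ 2) c with h | h | h
    · exact (hneg θ h).le
    · simp [h]
    · exact (mul_pos (sub_pos.2 h) (sub_pos.2
        (sqrt_inv_mul_sqrt_inv_lt hab hb hc0.le h (sin_sq_le_one θ)))).le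
  have hsplit : ∫ θ in (0 : ℝ)..(π / 2), (sin θ ^ 2 - c) *
      ((√(1 - b * sin θ ^ 2))⁻¹ * (√(1 - a * c))⁻¹ -
        (√(1 - b * c))⁻¹ * (√(1 - a * sin θ ^ 2))⁻¹) =
      (√(1 - a * c))⁻¹ * weightedK (fun θ => sin θ ^ 2 - c) b -
        (√(1 - b * c))⁻¹ * weightedK (fun θ => sin θ ^ 2 - c) a := by
    rw [weightedK, weightedK, ← intervalIntegral.integral_const_mul,
      ← intervalIntegral.integral_const_mul,
      ← integral_sub ((intervalIntegrable_weightedK (by fun_prop) hb).const_mul _)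
        ((intervalIntegrable_weightedK (by fun_prop) ha).const_mul _)]
    refine integral_congr fun θ _ => ?_
    ring
  rw [hsplit, hcenter a ha, hcenter b hb, hc, sub_self, zero_mul, mul_zero, sub_zero] at hpos
  rw [hc, ← sub_pos]
  exact pos_of_mul_pos_left (pos_of_mul_pos_right hpos hwa.le) (Kc_pos hb).le

/-- A logarithmic lower bound for `Kc` from an affine upper bound for its denominator. -/
lemma log_div_le_Kc {m a b : ℝ} (hm : m < 1) (hb : b ≠ 0)
    (hpos : ∀ θ ∈ Icc 0 (π / 2), 0 < a + b * θ)
    (hle : ∀ θ ∈ Icc 0 (π / 2), √(1 - m * sin θ ^ 2) ≤ a + b * θ) :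
    (log (a + b * (π / 2)) - log a) / b ≤ Kc m := by
  have hpi : (0 : ℝ) ≤ π / 2 := by positivity
  have hint : IntervalIntegrable (fun θ => (a + b * θ)⁻¹) volume 0 (π / 2) := by
    refine ContinuousOn.intervalIntegrable (ContinuousOn.inv₀ (by fun_prop) ?_)
    rw [uIcc_of_le hpi]
    exact fun θ hθ => (hpos θ hθ).ne'
  have hval : ∫ θ in (0 : ℝ)..(π / 2), (a + b * θ)⁻¹ = (log (a + b * (π / 2)) - log a) / b := by
    rw [integral_eq_sub_of_hasDerivAt (f := fun θ => log (a + b * θ) / b) ?_ hint]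
    · simp [sub_div]
    · rw [uIcc_of_le hpi]
      intro θ hθ
      have h1 : HasDerivAt (fun θ => a + b * θ) b θ := by
        simpa using ((hasDerivAt_id θ).const_mul b).const_add a
      refine ((h1.log (hpos θ hθ).ne').div_const b).congr_deriv ?_
      field_simp
  rw [← hval, Kc_eq_weightedK]
  refine integral_mono_on hpi hint (intervalIntegrable_weightedK continuous_const hm) ?_
  intro θ hθ
  rw [one_mul]
  exact inv_anti₀ (sqrt_pos.2 (one_sub_mul_sin_sq_pos hm θ)) (hle θ hθ)

lemma weightedK_le {g : ℝ → ℝ} (hg : Continuous g) {m C : ℝ} (hm : m < 1)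
    (h : ∀ θ ∈ Icc 0 (π / 2), g θ ≤ C * √(1 - m * sin θ ^ 2)) :
    weightedK g m ≤ C * (π / 2) := by
  have hpi : (0 : ℝ) ≤ π / 2 := by positivity
  have hconst : ∫ _ in (0 : ℝ)..(π / 2), C = C * (π / 2) := by simp [mul_comm]
  rw [← hconst]
  refine integral_mono_on hpi (intervalIntegrable_weightedK hg hm) intervalIntegrable_const ?_
  intro θ hθ
  rw [← div_eq_mul_inv, div_le_iff₀ (sqrt_pos.2 (one_sub_mul_sin_sq_pos hm θ))]
  exact h θ hθ

lemma weightedK_sin_sq_le {m : ℝ} (hm : m < 0) :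
    weightedK (fun θ => sin θ ^ 2) m ≤ (√(-m))⁻¹ * (π / 2) := by
  refine weightedK_le (by fun_prop) (hm.trans one_pos) fun θ hθ => ?_
  have hs : 0 < √(-m) := sqrt_pos.2 (neg_pos.2 hm)
  have hsin : 0 ≤ sin θ := sin_nonneg_of_nonneg_of_le_pi hθ.1 (by linarith [hθ.2, pi_pos])
  rw [← div_eq_inv_mul, le_div_iff₀ hs]
  refine le_sqrt_of_sq_le ?_
  have h4 : sin θ ^ 4 ≤ sin θ ^ 2 := pow_le_pow_of_le_one hsin (sin_le_one θ) (by norm_num)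
  rw [mul_pow, sq_sqrt (neg_pos.2 hm).le]
  nlinarith [mul_le_mul_of_nonneg_left h4 (neg_pos.2 hm).le]

lemma log_div_sqrt_le_Kc {m : ℝ} (hm : m < 0) :
    log (1 + √(-m) * (π / 2)) / √(-m) ≤ Kc m := by
  have hs : 0 < √(-m) := sqrt_pos.2 (neg_pos.2 hm)
  have h := log_div_le_Kc (m := m) (a := 1) (b := √(-m)) (hm.trans one_pos) hs.ne'
    (fun θ hθ => by nlinarith [mul_nonneg hs.le hθ.1]) fun θ hθ => ?_
  · simpa using h
  · have hθ0 : 0 ≤ √(-m) * θ := mul_nonneg hs.le hθ.1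
    refine sqrt_le_iff.2 ⟨by linarith, ?_⟩
    have hsq : sin θ ^ 2 ≤ θ ^ 2 := sq_le_sq' (by
      linarith [hθ.1, sin_nonneg_of_nonneg_of_le_pi hθ.1 (by linarith [hθ.2, pi_pos])])
      (sin_le hθ.1)
    have hmm : √(-m) ^ 2 = -m := sq_sqrt (neg_pos.2 hm).le
    have : (√(-m) * θ) ^ 2 = -m * θ ^ 2 := by rw [mul_pow, hmm]
    nlinarith [mul_le_mul_of_nonneg_left hsq (neg_pos.2 hm).le]

lemma tendsto_phiFun_atBot : Tendsto phiFun atBot (𝓝 0) := by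
  have hlog : Tendsto (fun m : ℝ => log (1 + √(-m) * (π / 2))) atBot atTop :=
    tendsto_log_atTop.comp (tendsto_atTop_add_const_left _ _
      ((tendsto_sqrt_atTop.comp tendsto_neg_atBot_atTop).atTop_mul_const (by positivity)))
  refine tendsto_of_tendsto_of_tendsto_of_le_of_le' tendsto_const_nhds
    (hlog.const_div_atTop (π / 2)) ?_ ?_
  · filter_upwards [eventually_lt_atBot 1] with m hm using (phiFun_pos hm).le
  · filter_upwards [eventually_lt_atBot 0] with m hm
    have hs : 0 < √(-m) := sqrt_pos.2 (neg_pos.2 hm)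
    have hl : 0 < log (1 + √(-m) * (π / 2)) := log_pos (by
      have : 0 < √(-m) * (π / 2) := by positivity
      linarith)
    rw [phiFun_eq (hm.trans one_pos)]
    calc weightedK (fun θ => sin θ ^ 2) m / Kc m
        ≤ ((√(-m))⁻¹ * (π / 2)) / (log (1 + √(-m) * (π / 2)) / √(-m)) :=
          div_le_div₀ (by positivity) (weightedK_sin_sq_le hm) (div_pos hl hs)
            (log_div_sqrt_le_Kc hm)
      _ = π / 2 / log (1 + √(-m) * (π / 2)) := by field_simp

lemma weightedK_cos_sq_le {m : ℝ} (hm : m < 1) : weightedK (fun θ => cos θ ^ 2) m ≤ π / 2 := by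
  rw [← one_mul (π / 2)]
  refine weightedK_le (by fun_prop) hm fun θ _ => ?_
  rw [one_mul]
  refine le_sqrt_of_sq_le ?_
  have h := sin_sq_add_cos_sq θ
  have h1 := cos_sq_le_one θ
  nlinarith [mul_nonneg (sub_pos.2 hm).le (sq_nonneg (sin θ)),
    mul_nonneg (sq_nonneg (cos θ)) (sub_nonneg.2 h1)]

lemma log_sub_log_le_Kc {m : ℝ} (hm : m < 1) :
    log (π / 2) - log √(1 - m) ≤ Kc m := by
  have hs : 0 < √(1 - m) := sqrt_pos.2 (sub_pos.2 hm)
  have h := log_div_le_Kc (m := m) (a := π / 2 + √(1 - m)) (b := -1) hm (by norm_num)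
    (fun θ hθ => by linarith [hθ.2]) fun θ hθ => ?_
  · have hmono : log (π / 2) ≤ log (π / 2 + √(1 - m)) :=
      log_le_log (by positivity) (by linarith)
    have heq : π / 2 + √(1 - m) + -1 * (π / 2) = √(1 - m) := by ring
    rw [heq] at h
    linarith
  · have hcos0 : 0 ≤ cos θ := cos_nonneg_of_mem_Icc ⟨by linarith [hθ.1, pi_pos], hθ.2⟩
    have hcos : cos θ ≤ π / 2 - θ := by
      rw [← sin_pi_div_two_sub]
      exact sin_le (by linarith [hθ.2])
    have hle : √(1 - m * sin θ ^ 2) ≤ cos θ + √(1 - m) := by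
      refine sqrt_le_iff.2 ⟨by linarith, ?_⟩
      have hmm : √(1 - m) ^ 2 = 1 - m := sq_sqrt (sub_pos.2 hm).le
      have h := sin_sq_add_cos_sq θ
      nlinarith [mul_nonneg hcos0 hs.le,
        mul_nonneg (sub_pos.2 hm).le (sub_nonneg.2 (sin_sq_le_one θ))]
    linarith

lemma tendsto_Kc_atTop : Tendsto Kc (𝓝[<] 1) atTop := by
  have hsqrt : Tendsto (fun m : ℝ => √(1 - m)) (𝓝[<] 1) (𝓝[>] 0) := by
    refine tendsto_nhdsWithin_iff.2 ⟨?_, ?_⟩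
    · have : Continuous fun m : ℝ => √(1 - m) := by fun_prop
      simpa using (this.tendsto 1).mono_left nhdsWithin_le_nhds
    · filter_upwards [self_mem_nhdsWithin] with m hm using sqrt_pos.2 (sub_pos.2 hm)
  have hlog : Tendsto (fun m : ℝ => log (π / 2) - log √(1 - m)) (𝓝[<] 1) atTop := by
    simpa [sub_eq_add_neg] using tendsto_atTop_add_const_left _ (log (π / 2))
      (tendsto_neg_atBot_atTop.comp (tendsto_log_nhdsGT_zero.comp hsqrt))
  refine tendsto_atTop_mono' _ ?_ hlog
  filter_upwards [self_mem_nhdsWithin] with m hm using log_sub_log_le_Kc hm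

lemma tendsto_phiFun_one : Tendsto phiFun (𝓝[<] 1) (𝓝 1) := by
  have h : Tendsto (fun m => 1 - π / 2 / Kc m) (𝓝[<] 1) (𝓝 1) := by
    simpa using (tendsto_Kc_atTop.const_div_atTop (π / 2)).const_sub 1
  refine tendsto_of_tendsto_of_tendsto_of_le_of_le' h tendsto_const_nhds ?_ ?_
  · filter_upwards [self_mem_nhdsWithin] with m hm
    have := div_le_div_of_nonneg_right (weightedK_cos_sq_le hm) (Kc_pos hm).le
    linarith [one_sub_phiFun hm]
  · filter_upwards [self_mem_nhdsWithin] with m hm using (phiFun_lt_one hm).le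

theorem stmt_15 :
    ContinuousOn phiFun (Set.Iio (1 : ℝ)) ∧
    DifferentiableOn ℝ phiFun (Set.Iio (1 : ℝ)) ∧
    StrictMonoOn phiFun (Set.Iio (1 : ℝ)) ∧
    Tendsto phiFun atBot (nhds 0) ∧
    Tendsto phiFun (nhdsWithin 1 (Set.Iio (1 : ℝ))) (nhds 1) :=
  ⟨differentiableOn_phiFun.continuousOn, differentiableOn_phiFun, strictMonoOn_phiFun,
    tendsto_phiFun_atBot, tendsto_phiFun_one⟩
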